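/- arXiv:1203.3282 — 9 statements merged into one kernel-verified Lean document; each statement's English description precedes it below -/
import Mathlib

section
/- Let m ≥ 1 and let C_{2^m} = { z·G_{2^m} : z ∈ U_m^{2^m} } be the linear code over U_m generated by the rows of G_{2^m}. Then the cardinality of C_{2^m} equals 2^{m·2^{m-1}} (equivalently, the rate of the code, i.e. the number of information bits per codeword divided by the code length 2^m, equals m/2). -/
open Polynomial

noncomputable section

/-- `F2` is the binary field. -/
abbrev F2 := ZMod 2

/-- `Um m` is the polynomial quotient ring `F₂[u] / (u^m)`. -/
abbrev Um (m : ℕ) := Polynomial F2 ⧸ Ideal.span {(X : Polynomial F2) ^ m}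

/-- `uu m` is the class of the variable in `Um m`. -/
def uu (m : ℕ) : Um m := Ideal.Quotient.mk _ (X : Polynomial F2)

/-- `Gmat m` is the `m`-fold Kronecker power over `Um m` of `[[1,1],[0,u]]`,
with rows and columns indexed by binary strings in `{0,1}^m`; its `(j,k)` entry
is the product over `t` of the `(j t, k t)` entries of `[[1,1],[0,u]]`. -/
def Gmat (m : ℕ) : Matrix (Fin m → Fin 2) (Fin m → Fin 2) (Um m) :=
  Matrix.of fun j k => ∏ t, (!![1, 1; 0, uu m] : Matrix (Fin 2) (Fin 2) (Um m)) (j t) (k t)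

/-- Kronecker power of a `2×2` matrix. -/
def kronPow {R : Type*} [CommRing R] (m : ℕ) (A : Matrix (Fin 2) (Fin 2) R) :
    Matrix (Fin m → Fin 2) (Fin m → Fin 2) R :=
  Matrix.of fun j k => ∏ t, A (j t) (k t)

theorem kronPow_mul {R : Type*} [CommRing R] (m : ℕ) (A B : Matrix (Fin 2) (Fin 2) R) :
    kronPow m (A * B) = kronPow m A * kronPow m B := by
  ext j k
  simp only [kronPow, Matrix.of_apply, Matrix.mul_apply]
  rw [Finset.prod_univ_sum, Fintype.piFinset_univ]
  simp only [Finset.prod_mul_distrib]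

theorem kronPow_one {R : Type*} [CommRing R] (m : ℕ) :
    kronPow m (1 : Matrix (Fin 2) (Fin 2) R) = 1 := by
  ext j k
  simp only [kronPow, Matrix.of_apply, Matrix.one_apply]
  by_cases h : j = k
  · subst h; simp
  · rw [if_neg h]
    obtain ⟨t, ht⟩ := Function.ne_iff.mp h
    exact Finset.prod_eq_zero (Finset.mem_univ t) (by simp [ht])

theorem card_Um (k : ℕ) : Nat.card (Um k) = 2 ^ k := by
  have h0 : (X ^ k : Polynomial F2) ≠ 0 := pow_ne_zero _ X_ne_zero
  have h := finrank_quotient_span_eq_natDegree (K := F2) (f := X ^ k)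
  rw [natDegree_X_pow] at h
  haveI : Module.Finite F2 (Um k) := (monic_X_pow k).finite_quotient
  rw [Module.natCard_eq_pow_finrank (K := F2), h]
  simp

theorem card_mul_pow (m k : ℕ) (hk : k ≤ m) :
    Nat.card (Set.range fun a : Um m => a * uu m ^ k) = 2 ^ (m - k) := by
  have hle : Ideal.span {(X : Polynomial F2) ^ m} ≤ Ideal.span {(X : Polynomial F2) ^ k} := by
    rw [Ideal.span_singleton_le_span_singleton]
    exact pow_dvd_pow _ hk
  have e := (DoubleQuot.quotQuotEquivQuotOfLE hle).toEquiv
  have h1 := Nat.card_congr e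
  have h2 := Submodule.card_eq_card_quotient_mul_card
    ((Ideal.span {(X : Polynomial F2) ^ k}).map
      (Ideal.Quotient.mk (Ideal.span {(X : Polynomial F2) ^ m})))
  have h3 : (((Ideal.span {(X : Polynomial F2) ^ k}).map
      (Ideal.Quotient.mk (Ideal.span {(X : Polynomial F2) ^ m})) : Ideal (Um m)) : Set (Um m))
      = Set.range fun a : Um m => a * uu m ^ k := by
    ext x
    rw [Ideal.map_span, Set.image_singleton, map_pow, SetLike.mem_coe,
      Ideal.mem_span_singleton']
    rfl
  have h4 := card_Um k
  have h5 := card_Um m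
  rw [← h3]
  have h6 : 2 ^ m = Nat.card (((Ideal.span {(X : Polynomial F2) ^ k}).map
      (Ideal.Quotient.mk (Ideal.span {(X : Polynomial F2) ^ m})) : Ideal (Um m))) * 2 ^ k := by
    rw [← h4, ← h5, ← h1]
    first | exact h2 | (rw [mul_comm]; exact h2)
  have h7 : 2 ^ m = 2 ^ (m - k) * 2 ^ k := by rw [← pow_add, Nat.sub_add_cancel hk]
  rw [h7] at h6
  exact (Nat.eq_of_mul_eq_mul_right (by positivity) h6).symm

/-- Hamming weight. -/
def wt {m : ℕ} (j : Fin m → Fin 2) : ℕ := ∑ t, (j t).val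

theorem wt_le {m : ℕ} (j : Fin m → Fin 2) : wt j ≤ m := by
  calc wt j ≤ ∑ _t : Fin m, 1 := Finset.sum_le_sum fun t _ => by omega
    _ = m := by simp

theorem wt_rev {m : ℕ} (j : Fin m → Fin 2) : wt (fun t => Fin.rev (j t)) + wt j = m := by
  unfold wt
  rw [← Finset.sum_add_distrib]
  calc _ = ∑ _t : Fin m, 1 := Finset.sum_congr rfl fun t _ => by
          rw [Fin.val_rev]; omega
    _ = m := by simp

theorem sum_wt (m : ℕ) (hm : 1 ≤ m) :
    ∑ j : Fin m → Fin 2, (m - wt j) = m * 2 ^ (m - 1) := by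
  have hA : ∑ j : Fin m → Fin 2, (m - wt j) = ∑ j : Fin m → Fin 2, wt j := by
    rw [← Equiv.sum_comp (Equiv.arrowCongr (Equiv.refl (Fin m)) Fin.revPerm) wt]
    refine Finset.sum_congr rfl fun j _ => ?_
    have := wt_rev j
    change m - wt j = wt (fun t => Fin.rev (j t))
    omega
  have hB : ∑ j : Fin m → Fin 2, (m - wt j) + ∑ j : Fin m → Fin 2, wt j = m * 2 ^ m := by
    rw [← Finset.sum_add_distrib]
    calc _ = ∑ _j : Fin m → Fin 2, m := Finset.sum_congr rfl fun j _ => by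
            have := wt_le j; omega
      _ = _ := by simp [mul_comm]
  obtain ⟨n, rfl⟩ := Nat.exists_eq_add_of_le' hm
  rw [pow_succ, ← mul_assoc] at hB
  rw [Nat.add_sub_cancel]
  omega

theorem Gmat_eq (m : ℕ) : Gmat m =
    Matrix.diagonal (fun j => uu m ^ wt j) * kronPow m !![1, 1; 0, 1] := by
  ext j k
  rw [Matrix.diagonal_mul]
  simp only [Gmat, kronPow, Matrix.of_apply, wt, ← Finset.prod_pow_eq_pow_sum,
    ← Finset.prod_mul_distrib]
  refine Finset.prod_congr rfl fun t _ => ?_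
  generalize j t = a
  generalize k t = b
  fin_cases a <;> fin_cases b <;> simp

/-- The linear code `C_{2^m} = { z · G_{2^m} : z ∈ U_m^{2^m} }` has cardinality
`2^(m·2^(m-1))`, i.e. its rate is `m/2`. -/
theorem stmt0 (m : ℕ) (hm : 1 ≤ m) :
    Nat.card {x : (Fin m → Fin 2) → Um m |
        ∃ z : (Fin m → Fin 2) → Um m, x = Matrix.vecMul z (Gmat m)} =
      2 ^ (m * 2 ^ (m - 1)) := by
  have hT : kronPow m (!![1, 1; 0, 1] : Matrix (Fin 2) (Fin 2) (Um m)) *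
      kronPow m !![1, -1; 0, 1] = 1 := by
    rw [← kronPow_mul, ← kronPow_one]
    congr 1
    ext a b
    fin_cases a <;> fin_cases b <;> simp [Matrix.mul_apply]
  have hinj : Function.Injective fun v : (Fin m → Fin 2) → Um m =>
      Matrix.vecMul v (kronPow m !![1, 1; 0, 1]) := by
    intro v w h
    have := congrArg (fun x => Matrix.vecMul x (kronPow m !![1, -1; 0, 1])) h
    simpa [Matrix.vecMul_vecMul, hT] using this
  have hset : {x : (Fin m → Fin 2) → Um m |
        ∃ z : (Fin m → Fin 2) → Um m, x = Matrix.vecMul z (Gmat m)} =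
      (fun v : (Fin m → Fin 2) → Um m => Matrix.vecMul v (kronPow m !![1, 1; 0, 1])) ''
        (Set.univ.pi fun j => Set.range fun a : Um m => a * uu m ^ wt j) := by
    ext x
    simp only [Set.mem_setOf_eq, Set.mem_image, Set.mem_univ_pi, Set.mem_range]
    constructor
    · rintro ⟨z, rfl⟩
      refine ⟨Matrix.vecMul z (Matrix.diagonal (fun j => uu m ^ wt j)), fun j => ⟨z j, ?_⟩, ?_⟩
      · rw [Matrix.vecMul_diagonal]
      · rw [Matrix.vecMul_vecMul, ← Gmat_eq]
    · rintro ⟨v, hv, rfl⟩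
      choose z hz using hv
      refine ⟨z, ?_⟩
      rw [Gmat_eq, ← Matrix.vecMul_vecMul]
      congr 1
      ext j
      rw [Matrix.vecMul_diagonal, hz]
  rw [hset, Nat.card_image_of_injective hinj,
    Nat.card_congr (Equiv.Set.univPi _), Nat.card_pi, ← sum_wt m hm, ← Finset.prod_pow_eq_pow_sum]
  exact Finset.prod_congr rfl fun j _ => card_mul_pow m _ (wt_le j)

end
end

section
/- Let m ≥ 1. A vector z ∈ U_m^{2^m} satisfies z·G_{2^m} = 0 if and only if, for every row index j ∈ {0,1}^m, the component z_j is divisible by u^{m−w(j)} in U_m, where w(j) is the Hamming weight of j. Consequently the kernel of the encoding map z ↦ z·G_{2^m} has cardinality 2^{m·2^{m-1}}. -/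
open Polynomial

noncomputable section

/-- `w j` is the Hamming weight of the binary string `j`. -/
def w {m : ℕ} (j : Fin m → Fin 2) : ℕ := ∑ t, (j t : ℕ)

theorem w_le {m : ℕ} (j : Fin m → Fin 2) : w j ≤ m := by
  unfold w
  calc ∑ t, (j t : ℕ) ≤ ∑ _t : Fin m, 1 := Finset.sum_le_sum fun t _ => by omega
    _ = m := by simp

open Classical in
theorem G_apply {m : ℕ} (j k : Fin m → Fin 2) :
    Gmat m j k = if j ≤ k then uu m ^ w j else 0 := by
  have key : ∀ a b : Fin 2, (!![1, 1; 0, uu m] : Matrix (Fin 2) (Fin 2) (Um m)) a b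
      = if a ≤ b then uu m ^ (a : ℕ) else 0 := by
    intro a b
    fin_cases a <;> fin_cases b <;> simp
  simp only [Gmat, Matrix.of_apply, key]
  split_ifs with h
  · rw [w, ← Finset.prod_pow_eq_pow_sum]
    exact Finset.prod_congr rfl fun t _ => if_pos (h t)
  · rw [Pi.le_def] at h
    push Not at h
    obtain ⟨t, ht⟩ := h
    exact Finset.prod_eq_zero (Finset.mem_univ t) (if_neg (not_le.mpr ht))

open Classical in
theorem kernel_iff {m : ℕ} (z : (Fin m → Fin 2) → Um m) :
    Matrix.vecMul z (Gmat m) = 0 ↔ ∀ j, z j * uu m ^ w j = 0 := by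
  have e : ∀ k, Matrix.vecMul z (Gmat m) k
      = ∑ j, if j ≤ k then z j * uu m ^ w j else 0 := by
    intro k
    simp only [Matrix.vecMul, dotProduct, G_apply, mul_ite, mul_zero]
  constructor
  · intro h j
    induction j using WellFoundedLT.induction with
    | ind k ih =>
      have hk := congrFun h k
      rw [e, Finset.sum_eq_single k] at hk
      · simpa using hk
      · intro j _ hj
        split_ifs with hle
        · exact ih j (lt_of_le_of_ne hle hj)
        · rfl
      · simp
  · intro h
    funext k
    rw [e]
    simp [h]

theorem mul_zero_iff {m : ℕ} (n : ℕ) (hn : n ≤ m) (x : Um m) :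
    x * uu m ^ n = 0 ↔ uu m ^ (m - n) ∣ x := by
  have hX : (X : Polynomial F2) ^ m = X ^ (m - n) * X ^ n := by
    rw [← pow_add, Nat.sub_add_cancel hn]
  constructor
  · obtain ⟨p, rfl⟩ := Ideal.Quotient.mk_surjective x
    intro h
    rw [uu, ← map_pow, ← map_mul, Ideal.Quotient.eq_zero_iff_mem,
      Ideal.mem_span_singleton, hX] at h
    have := (mul_dvd_mul_iff_right (pow_ne_zero n (X_ne_zero))).mp h
    rw [uu, ← map_pow]
    exact map_dvd _ this
  · rintro ⟨y, rfl⟩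
    have : uu m ^ m = 0 := by
      rw [uu, ← map_pow, Ideal.Quotient.eq_zero_iff_mem]
      exact Ideal.mem_span_singleton_self _
    calc uu m ^ (m - n) * y * uu m ^ n = uu m ^ (m - n + n) * y := by ring
      _ = 0 := by rw [Nat.sub_add_cancel hn, this, zero_mul]

theorem card_dvd {m : ℕ} (n : ℕ) (hn : n ≤ m) :
    Nat.card {x : Um m // uu m ^ (m - n) ∣ x} = 2 ^ n := by
  have hX : (X : Polynomial F2) ^ m = X ^ (m - n) * X ^ n := by
    rw [← pow_add, Nat.sub_add_cancel hn]
  let f : degreeLT F2 n → {x : Um m // uu m ^ (m - n) ∣ x} := fun p =>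
    ⟨uu m ^ (m - n) * Ideal.Quotient.mk _ p.1, Dvd.intro _ rfl⟩
  have hf : Function.Bijective f := by
    constructor
    · rintro ⟨p, hp⟩ ⟨q, hq⟩ h
      have h1 := congrArg Subtype.val h
      simp only [f] at h1
      rw [uu, ← map_pow, ← map_mul, ← map_mul, Ideal.Quotient.eq,
        Ideal.mem_span_singleton, ← mul_sub, hX] at h1
      have h2 := (mul_dvd_mul_iff_left (pow_ne_zero (m - n) (X_ne_zero))).mp h1
      have h3 := Submodule.sub_mem _ hp hq
      rw [mem_degreeLT] at h3
      have h4 : p - q = 0 := by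
        apply Polynomial.eq_zero_of_dvd_of_degree_lt h2
        rwa [degree_X_pow]
      exact Subtype.ext (sub_eq_zero.mp h4)
    · rintro ⟨x, y, rfl⟩
      obtain ⟨q, rfl⟩ := Ideal.Quotient.mk_surjective y
      have hm : (X ^ n : Polynomial F2).Monic := monic_X_pow n
      refine ⟨⟨q %ₘ X ^ n, ?_⟩, ?_⟩
      · rw [mem_degreeLT]
        have := degree_modByMonic_lt q hm
        rwa [degree_X_pow] at this
      · apply Subtype.ext
        simp only [f]
        rw [uu, ← map_pow, ← map_mul, ← map_mul, Ideal.Quotient.eq,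
          Ideal.mem_span_singleton, ← mul_sub, hX]
        apply mul_dvd_mul_left
        refine ⟨-(q /ₘ X ^ n), ?_⟩
        have := modByMonic_add_div q (X ^ n)
        linear_combination this
  rw [← Nat.card_congr (Equiv.ofBijective f hf),
    Nat.card_congr (degreeLTEquiv F2 n).toEquiv]
  simp

theorem sum_w (m : ℕ) (hm : 1 ≤ m) : ∑ j : Fin m → Fin 2, w j = m * 2 ^ (m - 1) := by
  let e : (Fin m → Fin 2) ≃ (Fin m → Fin 2) := Equiv.piCongrRight fun _ => Fin.revPerm
  have h1 : ∀ j, w j + w (e j) = m := by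
    intro j
    unfold w
    rw [← Finset.sum_add_distrib]
    calc _ = ∑ _t : Fin m, 1 := Finset.sum_congr rfl fun t _ => by
            simp [e, Fin.val_rev]; omega
      _ = m := by simp
  have h2 : ∑ j : Fin m → Fin 2, w j + ∑ j : Fin m → Fin 2, w (e j) = 2 ^ m * m := by
    rw [← Finset.sum_add_distrib, Finset.sum_congr rfl fun j _ => h1 j]
    simp
  rw [Equiv.sum_comp e w] at h2
  obtain ⟨k, rfl⟩ : ∃ k, m = k + 1 := ⟨m - 1, by omega⟩
  rw [pow_succ] at h2
  simp only [Nat.add_sub_cancel]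
  nlinarith

/-- A vector `z ∈ U_m^{2^m}` satisfies `z · G_{2^m} = 0` iff for each row index `j`
the component `z j` is divisible by `u^{m - w(j)}` in `U_m`; consequently the kernel of
the encoding map has cardinality `2^{m·2^{m-1}}`. -/
theorem stmt2 (m : ℕ) (hm : 1 ≤ m) :
    (∀ z : (Fin m → Fin 2) → Um m,
      Matrix.vecMul z (Gmat m) = 0 ↔ ∀ j, uu m ^ (m - w j) ∣ z j) ∧
    Nat.card {z : (Fin m → Fin 2) → Um m | Matrix.vecMul z (Gmat m) = 0} =
      2 ^ (m * 2 ^ (m - 1)) := by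
  have h : ∀ z : (Fin m → Fin 2) → Um m,
      Matrix.vecMul z (Gmat m) = 0 ↔ ∀ j, uu m ^ (m - w j) ∣ z j := fun z =>
    (kernel_iff z).trans (forall_congr' fun j => mul_zero_iff _ (w_le j) _)
  refine ⟨h, ?_⟩
  have e1 : {z : (Fin m → Fin 2) → Um m | Matrix.vecMul z (Gmat m) = 0} ≃
      {z : (Fin m → Fin 2) → Um m // ∀ j, uu m ^ (m - w j) ∣ z j} :=
    Equiv.subtypeEquivRight h
  rw [Nat.card_congr e1, Nat.card_congr (Equiv.subtypePiEquivPi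
    (p := fun (j : Fin m → Fin 2) (x : Um m) => uu m ^ (m - w j) ∣ x)), Nat.card_pi,
    Finset.prod_congr rfl fun j _ => card_dvd (w j) (w_le j),
    Finset.prod_pow_eq_pow_sum, sum_w m hm]

end
end

section
/- Let m ≥ 1. The code C_{2^m} = { z·G_{2^m} : z ∈ U_m^{2^m} } coincides with the multilevel (Construction D) code { Σ_{r=0}^{m-1} u^r · ι(c_r) : c_r ∈ RM(r,m) }, where ι : F₂^{2^m} → U_m^{2^m} is the componentwise inclusion sending 0 ↦ 0 and 1 ↦ 1. Moreover the representation is unique: if Σ_{r=0}^{m-1} u^r ι(c_r) = Σ_{r=0}^{m-1} u^r ι(c'_r) with c_r, c'_r ∈ RM(r,m) for all r, then c_r = c'_r for all r. -/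
open Polynomial

noncomputable section

/-- `Bmat m` is the `m`-fold Kronecker power over `F₂` of `[[1,1],[0,1]]`. -/
def Bmat (m : ℕ) : Matrix (Fin m → Fin 2) (Fin m → Fin 2) F2 :=
  Matrix.of fun j k => ∏ t, (!![1, 1; 0, 1] : Matrix (Fin 2) (Fin 2) F2) (j t) (k t)

/-- The Reed–Muller code `RM(r,m)`: the `F₂`-span of the rows of `Bmat m` whose row
index has Hamming weight at most `r`. -/
def RM (m r : ℕ) : Submodule F2 ((Fin m → Fin 2) → F2) :=
  Submodule.span F2 ((fun j => Bmat m j) '' {j | w j ≤ r})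

/-- `iotaUm m` is the componentwise inclusion `F₂^{2^m} → U_m^{2^m}` sending `0 ↦ 0`
and `1 ↦ 1`. -/
def iotaUm (m : ℕ) (c : (Fin m → Fin 2) → F2) : (Fin m → Fin 2) → Um m :=
  fun k => ((c k).val : Um m)

lemma natCast_val_eq (m : ℕ) (a : F2) :
    ((a.val : ℕ) : Um m) = Ideal.Quotient.mk _ (C a) := by
  have h : (C a : Polynomial F2) = ((a.val : ℕ) : Polynomial F2) := by
    rw [← Polynomial.C_eq_natCast, ZMod.natCast_zmod_val]
  rw [h, map_natCast]

lemma coeff_sum_aux (m : ℕ) (f : Fin m → F2) (d : ℕ) (hd : d < m) :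
    (∑ r : Fin m, (X : Polynomial F2) ^ (r : ℕ) * C (f r)).coeff d = f ⟨d, hd⟩ := by
  rw [Polynomial.finsetSum_coeff, Finset.sum_eq_single (⟨d, hd⟩ : Fin m)]
  · simp [Polynomial.coeff_X_pow]
  · intro b _ hb
    have : d ≠ (b : ℕ) := fun h => hb (Fin.ext h.symm)
    simp [Polynomial.coeff_X_pow, this]
  · simp

lemma sum_eq_mk (m : ℕ) (f : Fin m → F2) :
    ∑ r : Fin m, uu m ^ (r : ℕ) * (((f r).val : ℕ) : Um m) =
      Ideal.Quotient.mk _ (∑ r : Fin m, (X : Polynomial F2) ^ (r : ℕ) * C (f r)) := by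
  simp only [natCast_val_eq, uu, map_sum, map_mul, map_pow]

lemma mk_eq_sum (m : ℕ) (p : Polynomial F2) :
    (Ideal.Quotient.mk _ p : Um m) =
      ∑ r : Fin m, uu m ^ (r : ℕ) * (((p.coeff r).val : ℕ) : Um m) := by
  rw [sum_eq_mk m (fun r => p.coeff r), Ideal.Quotient.eq, Ideal.mem_span_singleton,
    Polynomial.X_pow_dvd_iff]
  intro d hd
  rw [Polynomial.coeff_sub, coeff_sum_aux m (fun r => p.coeff r) d hd, sub_self]

lemma sum_inj (m : ℕ) (f g : Fin m → F2)
    (h : ∑ r : Fin m, uu m ^ (r : ℕ) * (((f r).val : ℕ) : Um m) =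
      ∑ r : Fin m, uu m ^ (r : ℕ) * (((g r).val : ℕ) : Um m)) : f = g := by
  rw [sum_eq_mk, sum_eq_mk, Ideal.Quotient.eq, Ideal.mem_span_singleton,
    Polynomial.X_pow_dvd_iff] at h
  funext r
  have := h r r.2
  rw [Polynomial.coeff_sub, coeff_sum_aux m f r r.2, coeff_sum_aux m g r r.2] at this
  exact sub_eq_zero.mp this

lemma Gmat_eq_s4 (m : ℕ) (j k : Fin m → Fin 2) :
    Gmat m j k = uu m ^ w j * Ideal.Quotient.mk _ (C (Bmat m j k)) := by
  simp only [Gmat, Bmat, Matrix.of_apply, w, map_prod, ← Finset.prod_pow_eq_pow_sum,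
    ← Finset.prod_mul_distrib]
  refine Finset.prod_congr rfl fun t _ => ?_
  generalize j t = a
  generalize k t = b
  fin_cases a <;> fin_cases b <;> simp

lemma mem_RM (m r : ℕ) (c : (Fin m → Fin 2) → F2) (hc : c ∈ RM m r) :
    ∃ e : (Fin m → Fin 2) → F2, (∀ j, ¬ w j ≤ r → e j = 0) ∧
      c = ∑ j, e j • Bmat m j := by
  classical
  unfold RM at hc
  induction hc using Submodule.span_induction with
  | mem x hx =>
    obtain ⟨j, hj, rfl⟩ := hx
    refine ⟨Pi.single j 1, ?_, ?_⟩
    · intro i hi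
      rw [Pi.single_apply, if_neg]
      rintro rfl
      exact hi hj
    · rw [Finset.sum_eq_single j]
      · simp
      · intro b _ hb
        rw [Pi.single_eq_of_ne hb, zero_smul]
      · simp
  | zero => exact ⟨0, by simp, by simp⟩
  | add x y _ _ hx hy =>
    obtain ⟨e, he, rfl⟩ := hx
    obtain ⟨f, hf, rfl⟩ := hy
    exact ⟨e + f, fun j hj => by simp [he j hj, hf j hj],
      by simp [add_smul, Finset.sum_add_distrib]⟩
  | smul a x _ hx =>
    obtain ⟨e, he, rfl⟩ := hx
    exact ⟨a • e, fun j hj => by simp [he j hj], by simp [Finset.smul_sum, mul_smul]⟩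

/-- The code `C_{2^m}` coincides with the multilevel (Construction D) code
`{ Σ_{r=0}^{m-1} u^r · ι(c_r) : c_r ∈ RM(r,m) }`, and the representation is unique. -/
theorem stmt4 (m : ℕ) (hm : 1 ≤ m) :
    ({x : (Fin m → Fin 2) → Um m | ∃ z, x = Matrix.vecMul z (Gmat m)} =
      {x : (Fin m → Fin 2) → Um m | ∃ c : Fin m → ((Fin m → Fin 2) → F2),
        (∀ r : Fin m, c r ∈ RM m (r : ℕ)) ∧
        x = fun k => ∑ r : Fin m, uu m ^ (r : ℕ) * iotaUm m (c r) k}) ∧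
    ∀ c c' : Fin m → ((Fin m → Fin 2) → F2),
      (∀ r : Fin m, c r ∈ RM m (r : ℕ)) → (∀ r : Fin m, c' r ∈ RM m (r : ℕ)) →
      (fun k => ∑ r : Fin m, uu m ^ (r : ℕ) * iotaUm m (c r) k) =
        (fun k => ∑ r : Fin m, uu m ^ (r : ℕ) * iotaUm m (c' r) k) →
      c = c' := by
  refine ⟨Set.ext fun x => ⟨?_, ?_⟩, ?_⟩
  · rintro ⟨z, rfl⟩
    choose p hp using fun j => Ideal.Quotient.mk_surjective (z j)
    refine ⟨fun r => ∑ j, (p j * X ^ w j).coeff r • Bmat m j, ?_, ?_⟩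
    · intro r
      refine Submodule.sum_mem _ fun j _ => ?_
      by_cases h : w j ≤ r
      · exact Submodule.smul_mem _ _ (Submodule.subset_span ⟨j, h, rfl⟩)
      · rw [Polynomial.coeff_mul_X_pow', if_neg h, zero_smul]
        exact Submodule.zero_mem _
    · funext k
      have key : Matrix.vecMul z (Gmat m) k =
          Ideal.Quotient.mk _ (∑ j, p j * X ^ w j * C (Bmat m j k)) := by
        simp only [Matrix.vecMul, dotProduct, Gmat_eq_s4, map_sum, map_mul, map_pow, hp, uu,
          mul_assoc]
      rw [key, mk_eq_sum]
      refine Finset.sum_congr rfl fun r _ => ?_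
      simp only [iotaUm, Polynomial.finsetSum_coeff, Polynomial.coeff_mul_C,
        Finset.sum_apply, Pi.smul_apply, smul_eq_mul]
  · rintro ⟨c, hc, rfl⟩
    choose e he hce using fun r => mem_RM m _ _ (hc r)
    refine ⟨fun j => ∑ r : Fin m, uu m ^ ((r : ℕ) - w j) * Ideal.Quotient.mk _ (C (e r j)), ?_⟩
    funext k
    simp only [Matrix.vecMul, dotProduct, Gmat_eq_s4, Finset.sum_mul]
    rw [Finset.sum_comm]
    refine Finset.sum_congr rfl fun r _ => ?_
    rw [iotaUm, natCast_val_eq, hce r]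
    simp only [Finset.sum_apply, Pi.smul_apply, smul_eq_mul, map_sum, map_mul, Finset.mul_sum]
    refine Finset.sum_congr rfl fun j _ => ?_
    by_cases h : w j ≤ r
    · have : uu m ^ (r : ℕ) = uu m ^ ((r : ℕ) - w j) * uu m ^ w j := by
        rw [← pow_add, Nat.sub_add_cancel h]
      rw [this]
      ring
    · rw [he r j h]
      simp
  · intro c c' _ _ h
    funext r k
    exact congrFun (sum_inj m (fun r => c r k) (fun r => c' r k) (congrFun h k)) r

end
end

section
/- Let m ≥ 1 and let ℤ[i] be the ring of Gaussian integers. Every z ∈ ℤ[i] admits a unique representation z = Σ_{r=0}^{m-1} b_r (1+i)^r + (1+i)^m w with b_0, …, b_{m-1} ∈ {0,1} and w ∈ ℤ[i]. Equivalently, the set T_m = { Σ_{r=0}^{m-1} b_r (1+i)^r : b_r ∈ {0,1} } is a complete set of coset representatives of ℤ[i] modulo the ideal (1+i)^m ℤ[i]. -/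
noncomputable section

/-- The imaginary unit `i` of the Gaussian integers. -/
def gi : GaussianInt := ⟨0, 1⟩

theorem digit_exists (z : GaussianInt) :
    ∃ b w : GaussianInt, (b = 0 ∨ b = 1) ∧ z = b + (1 + gi) * w := by
  obtain ⟨a, c⟩ := z
  rcases Int.emod_two_eq_zero_or_one (a + c) with h | h
  · refine ⟨0, ⟨(a + c) / 2, (c - a) / 2⟩, Or.inl rfl, ?_⟩
    apply Zsqrtd.ext <;> simp [gi] <;> omega
  · refine ⟨1, ⟨(a - 1 + c) / 2, (c - a + 1) / 2⟩, Or.inr rfl, ?_⟩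
    apply Zsqrtd.ext <;> simp [gi] <;> omega

theorem digit_unique (b b' w w' : GaussianInt) (hb : b = 0 ∨ b = 1) (hb' : b' = 0 ∨ b' = 1)
    (h : b + (1 + gi) * w = b' + (1 + gi) * w') : b = b' ∧ w = w' := by
  have h1 := congrArg Zsqrtd.re h
  have h2 := congrArg Zsqrtd.im h
  rcases hb with rfl | rfl <;> rcases hb' with rfl | rfl <;> simp [gi] at h1 h2
  · exact ⟨rfl, by apply Zsqrtd.ext <;> omega⟩
  · omega
  · omega
  · exact ⟨rfl, by apply Zsqrtd.ext <;> omega⟩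

theorem step_sum (m : ℕ) (b : Fin (m + 1) → GaussianInt) (w : GaussianInt) :
    (∑ r : Fin (m + 1), b r * (1 + gi) ^ (r : ℕ)) + (1 + gi) ^ (m + 1) * w
      = b 0 + (1 + gi) *
        ((∑ r : Fin m, b r.succ * (1 + gi) ^ (r : ℕ)) + (1 + gi) ^ m * w) := by
  rw [Fin.sum_univ_succ, mul_add, Finset.mul_sum]
  have : ∀ r : Fin m, b r.succ * (1 + gi) ^ ((r.succ : Fin (m + 1)) : ℕ)
      = (1 + gi) * (b r.succ * (1 + gi) ^ (r : ℕ)) := by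
    intro r
    rw [Fin.val_succ]
    ring
  simp only [this, Fin.val_zero, pow_zero, mul_one]
  ring

theorem rep_exists (m : ℕ) : ∀ z : GaussianInt,
    ∃ (b : Fin m → GaussianInt) (w : GaussianInt), (∀ r, b r = 0 ∨ b r = 1) ∧
      z = (∑ r : Fin m, b r * (1 + gi) ^ (r : ℕ)) + (1 + gi) ^ m * w := by
  induction m with
  | zero => exact fun z => ⟨Fin.elim0, z, fun r => r.elim0, by simp⟩
  | succ m ih =>
    intro z
    obtain ⟨d, v, hd, hz⟩ := digit_exists z
    obtain ⟨b, w, hb, hv⟩ := ih v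
    refine ⟨Fin.cons d b, w, ?_, ?_⟩
    · intro r
      refine Fin.cases ?_ ?_ r
      · simpa using hd
      · simpa using hb
    · rw [step_sum]
      simp only [Fin.cons_zero, Fin.cons_succ]
      rw [← hv, ← hz]

theorem rep_unique (m : ℕ) : ∀ (b b' : Fin m → GaussianInt) (w w' : GaussianInt),
    (∀ r, b r = 0 ∨ b r = 1) → (∀ r, b' r = 0 ∨ b' r = 1) →
      (∑ r : Fin m, b r * (1 + gi) ^ (r : ℕ)) + (1 + gi) ^ m * w
        = (∑ r : Fin m, b' r * (1 + gi) ^ (r : ℕ)) + (1 + gi) ^ m * w' →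
      b = b' ∧ w = w' := by
  induction m with
  | zero =>
    intro b b' w w' _ _ h
    exact ⟨Subsingleton.elim _ _, by simpa using h⟩
  | succ m ih =>
    intro b b' w w' hb hb' h
    rw [step_sum, step_sum] at h
    obtain ⟨h0, h1⟩ := digit_unique _ _ _ _ (hb 0) (hb' 0) h
    obtain ⟨h2, h3⟩ := ih (fun r => b r.succ) (fun r => b' r.succ) w w'
      (fun r => hb _) (fun r => hb' _) h1
    refine ⟨funext fun r => ?_, h3⟩
    exact Fin.cases h0 (fun r => congrFun h2 r) r

/-- Every Gaussian integer `z` admits a unique representation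
`z = Σ_{r=0}^{m-1} b_r (1+i)^r + (1+i)^m · w` with `b_r ∈ {0,1}` and `w ∈ ℤ[i]`;
equivalently, `T_m = { Σ b_r (1+i)^r : b_r ∈ {0,1} }` is a complete set of coset
representatives of `ℤ[i]` modulo `(1+i)^m ℤ[i]`. -/
theorem stmt5 (m : ℕ) (hm : 1 ≤ m) (z : GaussianInt) :
    ∃! p : (Fin m → GaussianInt) × GaussianInt,
      (∀ r, p.1 r = 0 ∨ p.1 r = 1) ∧
      z = (∑ r : Fin m, p.1 r * (1 + gi) ^ (r : ℕ)) + (1 + gi) ^ m * p.2 := by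
  obtain ⟨b, w, hb, hz⟩ := rep_exists m z
  refine ⟨(b, w), ⟨hb, hz⟩, ?_⟩
  rintro ⟨b', w'⟩ ⟨hb', hz'⟩
  obtain ⟨h1, h2⟩ := rep_unique m b' b w' w hb' hb (hz'.symm.trans hz)
  exact Prod.ext h1 h2

end
end

section
/- Let m ≥ 1. The map Φ : U_m → ℤ[i] defined by Φ(Σ_{j=0}^{m-1} b_j u^j) = Σ_{j=0}^{m-1} ψ(b_j) (1+i)^j, where b_j ∈ F₂ are the coefficients of the unique polynomial representative of degree < m and ψ : F₂ → ℤ[i] sends 0 ↦ 0 and 1 ↦ 1, is injective, and its image is a complete set of coset representatives of ℤ[i] modulo the ideal (1+i)^m ℤ[i]. -/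
open Polynomial

noncomputable section

/-- `psiG` sends `0 ↦ 0` and `1 ↦ 1` from `F₂` to `ℤ[i]`. -/
def psiG (b : F2) : GaussianInt := (b.val : GaussianInt)

/-- The digit expansion with digits `b` in base `1 + i`. -/
def digS (b : ℕ → F2) (n : ℕ) : GaussianInt :=
  ∑ j ∈ Finset.range n, psiG (b j) * (1 + gi) ^ j

lemma digS_succ (b : ℕ → F2) (n : ℕ) :
    digS b (n + 1) = psiG (b 0) + (1 + gi) * digS (fun j => b (j + 1)) n := by
  unfold digS
  rw [Finset.sum_range_succ', Finset.mul_sum, add_comm]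
  congr 1
  · simp
  · apply Finset.sum_congr rfl
    intro j _
    ring

lemma base_ne_zero : (1 + gi : GaussianInt) ≠ 0 := by
  intro h
  have := congrArg Zsqrtd.re h
  simp [gi] at this

lemma psiG_eq_of_dvd (b c : F2) (h : (1 + gi) ∣ psiG b - psiG c) : b = c := by
  obtain ⟨w, hw⟩ := h
  have h1 := congrArg Zsqrtd.re hw
  have h2 := congrArg Zsqrtd.im hw
  simp [gi, psiG, -ZMod.natCast_val] at h1 h2
  have hb := ZMod.val_lt b
  have hc := ZMod.val_lt c
  apply ZMod.val_injective 2
  omega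

lemma exists_digit (z : GaussianInt) : ∃ b : F2, ∃ w, z - psiG b = (1 + gi) * w := by
  obtain ⟨x, y⟩ := z
  rcases Int.even_or_odd' (x + y) with ⟨k, h | h⟩
  · refine ⟨0, ⟨k, y - k⟩, ?_⟩
    ext <;> simp [gi, psiG] <;> omega
  · refine ⟨1, ⟨k, y - k⟩, ?_⟩
    ext <;> simp [gi, psiG, ZMod.val_one] <;> omega

lemma digS_unique (n : ℕ) : ∀ b c : ℕ → F2, (1 + gi) ^ n ∣ digS b n - digS c n →
    ∀ j < n, b j = c j := by
  induction n with
  | zero => intro b c _ j hj; omega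
  | succ n ih =>
    intro b c h
    rw [digS_succ, digS_succ] at h
    have h0 : b 0 = c 0 := by
      apply psiG_eq_of_dvd
      have h1 : (1 + gi) ∣ (1 + gi) ^ (n + 1) := dvd_pow_self _ (by omega)
      have h2 := h1.trans h
      have h3 := dvd_sub h2 (Dvd.intro (digS (fun j => b (j + 1)) n -
        digS (fun j => c (j + 1)) n) rfl)
      convert h3 using 1
      ring
    rw [h0, add_sub_add_left_eq_sub, ← mul_sub, pow_succ'] at h
    have h' := ih _ _ ((mul_dvd_mul_iff_left base_ne_zero).1 h)
    intro j hj
    cases j with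
    | zero => exact h0
    | succ j => exact h' j (by omega)

lemma digS_exists (n : ℕ) : ∀ z : GaussianInt, ∃ b : ℕ → F2,
    (1 + gi) ^ n ∣ z - digS b n := by
  induction n with
  | zero => intro z; exact ⟨0, by simp⟩
  | succ n ih =>
    intro z
    obtain ⟨d, w, hw⟩ := exists_digit z
    obtain ⟨b, hb⟩ := ih w
    refine ⟨fun j => Nat.casesOn j d b, ?_⟩
    rw [digS_succ]
    have : z - (psiG d + (1 + gi) * digS b n) = (1 + gi) * (w - digS b n) := by
      rw [mul_sub, ← hw]; ring
    change _ ∣ z - (psiG d + (1 + gi) * digS b n)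
    rw [this, pow_succ']
    exact mul_dvd_mul_left _ hb

lemma mk_eq_iff_coeff (m : ℕ) (p q : Polynomial F2) :
    Ideal.Quotient.mk (Ideal.span {(X : Polynomial F2) ^ m}) p =
      Ideal.Quotient.mk (Ideal.span {(X : Polynomial F2) ^ m}) q ↔
      ∀ j < m, p.coeff j = q.coeff j := by
  rw [Ideal.Quotient.eq, Ideal.mem_span_singleton, X_pow_dvd_iff]
  simp [sub_eq_zero]

/-- The map `Φ : U_m → ℤ[i]`, defined on the unique polynomial representative of
degree `< m` by `Φ(Σ b_j u^j) = Σ ψ(b_j)(1+i)^j`, is injective, and its image is a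
complete set of coset representatives of `ℤ[i]` modulo `(1+i)^m ℤ[i]`. -/
theorem stmt6 (m : ℕ) (hm : 1 ≤ m) :
    ∃ Φ : Um m → GaussianInt,
      (∀ p : Polynomial F2, p.degree < (m : WithBot ℕ) →
        Φ (Ideal.Quotient.mk (Ideal.span {(X : Polynomial F2) ^ m}) p) =
          ∑ j ∈ Finset.range m, psiG (p.coeff j) * (1 + gi) ^ j) ∧
      Function.Injective Φ ∧
      ∀ z : GaussianInt, ∃! x : Um m, (1 + gi) ^ m ∣ z - Φ x := by
  have hΦ : ∃ Φ : Um m → GaussianInt, ∀ p : Polynomial F2,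
      Φ (Ideal.Quotient.mk (Ideal.span {(X : Polynomial F2) ^ m}) p) = digS p.coeff m := by
    choose r hr using Ideal.Quotient.mk_surjective (I := Ideal.span {(X : Polynomial F2) ^ m})
    refine ⟨fun x => digS (r x).coeff m, fun p => ?_⟩
    have h := (mk_eq_iff_coeff m _ _).1 (hr (Ideal.Quotient.mk _ p))
    apply Finset.sum_congr rfl
    intro j hj
    rw [h j (Finset.mem_range.1 hj)]
  obtain ⟨Φ, hΦ⟩ := hΦ
  have key : ∀ x y, (1 + gi) ^ m ∣ Φ x - Φ y → x = y := by
    intro x y h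
    obtain ⟨p, rfl⟩ := Ideal.Quotient.mk_surjective x
    obtain ⟨q, rfl⟩ := Ideal.Quotient.mk_surjective y
    rw [hΦ, hΦ] at h
    exact (mk_eq_iff_coeff m p q).2 (digS_unique m _ _ h)
  refine ⟨Φ, fun p _ => hΦ p, fun x y h => key x y (by simp [h]), fun z => ?_⟩
  obtain ⟨b, hb⟩ := digS_exists m z
  have hx : (1 + gi) ^ m ∣ z - Φ (Ideal.Quotient.mk _
      (∑ j ∈ Finset.range m, Polynomial.monomial j (b j))) := by
    rw [hΦ]
    convert hb using 2
    apply Finset.sum_congr rfl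
    intro j hj
    congr 2
    rw [Polynomial.finsetSum_coeff]
    simp only [Polynomial.coeff_monomial]
    rw [Finset.sum_ite_eq' (Finset.range m) j b, if_pos hj]
  refine ⟨_, hx, fun y hy => key _ _ ?_⟩
  have := dvd_sub hx hy
  rwa [sub_sub_sub_cancel_left] at this

end
end

section
/- Let m ≥ 3 be odd and define, for z ∈ ℤ[i], the map φ(z) = ϕ(z mod 2^{(m+1)/2}), where z mod 2^{(m+1)/2} denotes the Gaussian integer whose real and imaginary parts are the residues in {0,…,2^{(m+1)/2}−1} of Re z and Im z modulo 2^{(m+1)/2}, and ϕ is defined on such residues w by: ϕ(w) = w if Im w < 2^{(m-1)/2}; ϕ(w) = w + 2^{(m-1)/2}(1 − i) if Re w < 2^{(m-1)/2} and Im w ≥ 2^{(m-1)/2}; ϕ(w) = w − 2^{(m-1)/2}(1 + i) if Re w ≥ 2^{(m-1)/2} and Im w ≥ 2^{(m-1)/2}. Then for every z ∈ ℤ[i], φ(z) ≡ z modulo the ideal (1+i)^m ℤ[i]. -/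
noncomputable section

/-- Componentwise reduction of a Gaussian integer modulo `M`: the real and imaginary
parts are replaced by their residues in `{0, …, M-1}`. -/
def gmod (M : ℤ) (z : GaussianInt) : GaussianInt := ⟨z.re % M, z.im % M⟩

/-- The folding map `ϕ` with parameter `h`: it leaves `w` unchanged if `Im w < h`;
adds `h(1 - i)` if `Re w < h` and `Im w ≥ h`; subtracts `h(1 + i)` if `Re w ≥ h` and
`Im w ≥ h`. -/
def trim (h : ℤ) (w : GaussianInt) : GaussianInt :=
  if w.im < h then w
  else if w.re < h then w + (⟨h, -h⟩ : GaussianInt)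
  else w - (⟨h, h⟩ : GaussianInt)

theorem gi_sq : gi * gi = -1 := by
  ext <;> simp [gi]

theorem gmod_eq (M : ℤ) (z : GaussianInt) :
    gmod M z = z - (M : GaussianInt) * ⟨z.re / M, z.im / M⟩ := by
  ext
  · simp [gmod, Int.emod_def]
  · simp [gmod, Int.emod_def]

theorem mk_eq (a b : ℤ) : (⟨a, b⟩ : GaussianInt) = (a : GaussianInt) + b * gi := by
  ext <;> simp [gi]

theorem pow_dvd_aux (k : ℕ) :
    (1 + gi) ^ (2 * k + 1) ∣ (2 : GaussianInt) ^ k * (1 + gi) := by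
  refine ⟨(-gi) ^ k, ?_⟩
  have h2 : (2 : GaussianInt) = (1 + gi) ^ 2 * (-gi) := by
    linear_combination (2 + gi) * gi_sq
  have h3 : (2 : GaussianInt) ^ k = ((1 + gi) ^ 2 * (-gi)) ^ k := by rw [← h2]
  rw [h3, mul_pow, pow_succ _ (2 * k), pow_mul]
  ring

/-- For odd `m ≥ 3`, the map `φ(z) = ϕ(z mod 2^((m+1)/2))` (with folding parameter
`h = 2^((m-1)/2)`) satisfies `φ(z) ≡ z` modulo the ideal `(1+i)^m ℤ[i]`. -/
theorem stmt8 (m : ℕ) (hm : 3 ≤ m) (hodd : Odd m) (z : GaussianInt) :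
    (1 + gi) ^ m ∣ trim (2 ^ ((m - 1) / 2)) (gmod (2 ^ ((m + 1) / 2)) z) - z := by
  obtain ⟨k, rfl⟩ := hodd
  have e1 : (2 * k + 1 - 1) / 2 = k := by omega
  have e2 : (2 * k + 1 + 1) / 2 = k + 1 := by omega
  rw [e1, e2]
  refine (pow_dvd_aux k).trans ?_
  have hg := gmod_eq (2 ^ (k + 1)) z
  generalize gmod (2 ^ (k + 1)) z = w at hg ⊢
  generalize (⟨z.re / 2 ^ (k + 1), z.im / 2 ^ (k + 1)⟩ : GaussianInt) = q at hg
  push_cast at hg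
  unfold trim
  split_ifs
  · refine ⟨-(1 - gi) * q, ?_⟩
    linear_combination hg - 2 ^ k * q * gi_sq
  · refine ⟨-(1 - gi) * q - gi, ?_⟩
    rw [mk_eq]
    push_cast
    linear_combination hg - 2 ^ k * q * gi_sq + 2 ^ k * gi_sq
  · refine ⟨-(1 - gi) * q - 1, ?_⟩
    rw [mk_eq]
    push_cast
    linear_combination hg - 2 ^ k * q * gi_sq

end
end

section
/- Let m ≥ 3 be odd. The map χ : U_m → ℤ[i] given by χ(x) = ϕ(Φ(x) mod 2^{(m+1)/2}) is injective, where Φ(Σ_{j=0}^{m-1} b_j u^j) = Σ_{j=0}^{m-1} ψ(b_j)(1+i)^j with ψ(0)=0, ψ(1)=1; w mod 2^{(m+1)/2} denotes the Gaussian integer whose real and imaginary parts are the residues in {0,…,2^{(m+1)/2}−1} of Re w and Im w modulo 2^{(m+1)/2}; and ϕ is defined on such residues w by: ϕ(w) = w if Im w < 2^{(m-1)/2}; ϕ(w) = w + 2^{(m-1)/2}(1 − i) if Re w < 2^{(m-1)/2} and Im w ≥ 2^{(m-1)/2}; ϕ(w) = w − 2^{(m-1)/2}(1 + i) if Re w ≥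 2^{(m-1)/2} and Im w ≥ 2^{(m-1)/2}. -/
noncomputable section

theorem not_dvd_one : ¬ (1 + gi) ∣ (1 : GaussianInt) := by
  rintro ⟨c, hc⟩
  have h1 := congrArg Zsqrtd.re hc
  have h2 := congrArg Zsqrtd.im hc
  simp [gi] at h1 h2
  omega

theorem one_add_gi_ne : (1 + gi) ≠ 0 := by
  intro hc
  have h1 := congrArg Zsqrtd.im hc
  simp [gi] at h1

theorem digits (n : ℕ) : ∀ (b b' : Fin n → GaussianInt)
    (_ : ∀ r, b r = 0 ∨ b r = 1) (_ : ∀ r, b' r = 0 ∨ b' r = 1)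
    (_ : (1 + gi) ^ n ∣ (∑ r : Fin n, b r * (1 + gi) ^ (r : ℕ)) -
      ∑ r : Fin n, b' r * (1 + gi) ^ (r : ℕ)), b = b' := by
  induction n with
  | zero => intro b b' _ _ _; exact Subsingleton.elim _ _
  | succ n ih =>
    intro b b' hb hb' h
    have key : ∀ c : Fin (n + 1) → GaussianInt,
        ∑ r : Fin (n + 1), c r * (1 + gi) ^ (r : ℕ) =
          c 0 + (1 + gi) * ∑ r : Fin n, c r.succ * (1 + gi) ^ (r : ℕ) := by
      intro c
      rw [Fin.sum_univ_succ, Finset.mul_sum]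
      simp only [Fin.val_zero, pow_zero, mul_one, Fin.val_succ]
      congr 1
      refine Finset.sum_congr rfl fun r _ => ?_
      ring
    rw [key, key] at h
    have h0 : (1 + gi) ∣ b 0 - b' 0 := by
      have h1 := (Dvd.intro_left ((1 + gi) ^ n) (pow_succ (1 + gi) n).symm).trans h
      have h2 := dvd_sub h1 (dvd_mul_right (1 + gi)
        ((∑ r : Fin n, b r.succ * (1 + gi) ^ (r : ℕ)) -
          ∑ r : Fin n, b' r.succ * (1 + gi) ^ (r : ℕ)))
      convert h2 using 1
      ring
    have e0 : b 0 = b' 0 := by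
      rcases hb 0 with h1 | h1 <;> rcases hb' 0 with h2 | h2 <;> rw [h1, h2] at h0 ⊢
      · rw [zero_sub, dvd_neg] at h0; exact absurd h0 not_dvd_one
      · rw [sub_zero] at h0; exact absurd h0 not_dvd_one
    rw [e0, add_sub_add_left_eq_sub, ← mul_sub, pow_succ'] at h
    have h3 := (mul_dvd_mul_iff_left one_add_gi_ne).1 h
    have h4 := ih (fun r => b r.succ) (fun r => b' r.succ) (fun r => hb _) (fun r => hb' _) h3
    funext r
    refine Fin.cases e0 (fun j => ?_) r
    exact congrFun h4 j

theorem pow_dvd (k : ℕ) : (1 + gi) ^ (2 * k + 1) ∣ ((2 ^ k : ℤ) : GaussianInt) * (1 + gi) := by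
  refine ⟨(-gi) ^ k, ?_⟩
  have e : (1 + gi) ^ 2 * (-gi) = 2 := by linear_combination (-2 - gi) * gi_sq
  rw [pow_succ, pow_mul, mul_right_comm, ← mul_pow, e]
  push_cast
  rfl

theorem trim_dvd (H : ℤ) (w : GaussianInt) : (H : GaussianInt) * (1 + gi) ∣ trim H w - w := by
  unfold trim
  split_ifs
  · simp
  · refine ⟨-gi, ?_⟩
    ext <;> simp [gi]
  · refine ⟨-1, ?_⟩
    ext <;> simp [gi]

theorem gmod_dvd (H : ℤ) (w : GaussianInt) :
    (H : GaussianInt) * (1 + gi) ∣ w - gmod (H * 2) w := by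
  refine ⟨(1 - gi) * ⟨w.re / (H * 2), w.im / (H * 2)⟩, ?_⟩
  have e : (H : GaussianInt) * (1 + gi) * ((1 - gi) * ⟨w.re / (H * 2), w.im / (H * 2)⟩)
      = ((H * 2 : ℤ) : GaussianInt) * ⟨w.re / (H * 2), w.im / (H * 2)⟩ := by
    push_cast
    linear_combination (-(H : GaussianInt) * ⟨w.re / (H * 2), w.im / (H * 2)⟩) * gi_sq
  rw [e]
  have h1 := Int.emod_add_mul_ediv w.re (H * 2)
  have h2 := Int.emod_add_mul_ediv w.im (H * 2)
  ext
  · rw [Zsqrtd.re_smul]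
    simp only [gmod, Zsqrtd.re_sub]
    linarith
  · rw [Zsqrtd.im_smul]
    simp only [gmod, Zsqrtd.im_sub]
    linarith

/-- For odd `m ≥ 3`, the map `χ(x) = ϕ(Φ(x) mod 2^((m+1)/2))` on `U_m` is injective:
elements of `U_m` correspond to coefficient tuples `b ∈ {0,1}^m` via
`Φ(x) = Σ_{r<m} b_r (1+i)^r`, and equal values of `χ` force equal tuples. -/
theorem stmt10 (m : ℕ) (hm : 3 ≤ m) (hodd : Odd m)
    (b b' : Fin m → GaussianInt)
    (hb : ∀ r, b r = 0 ∨ b r = 1) (hb' : ∀ r, b' r = 0 ∨ b' r = 1)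
    (h : trim (2 ^ ((m - 1) / 2))
          (gmod (2 ^ ((m + 1) / 2)) (∑ r : Fin m, b r * (1 + gi) ^ (r : ℕ))) =
        trim (2 ^ ((m - 1) / 2))
          (gmod (2 ^ ((m + 1) / 2)) (∑ r : Fin m, b' r * (1 + gi) ^ (r : ℕ)))) :
    b = b' := by
  obtain ⟨k, rfl⟩ := hodd
  have e1 : (2 * k + 1 - 1) / 2 = k := by omega
  have e2 : (2 * k + 1 + 1) / 2 = k + 1 := by omega
  rw [e1, e2, pow_succ] at h
  apply digits _ b b' hb hb'
  refine (pow_dvd k).trans ?_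
  generalize (∑ r, b r * (1 + gi) ^ (r : ℕ)) = z at h ⊢
  generalize (∑ r, b' r * (1 + gi) ^ (r : ℕ)) = z' at h ⊢
  have a1 := dvd_add (trim_dvd (2 ^ k) (gmod (2 ^ k * 2) z)) (gmod_dvd (2 ^ k) z)
  have a2 := dvd_add (trim_dvd (2 ^ k) (gmod (2 ^ k * 2) z')) (gmod_dvd (2 ^ k) z')
  have a3 := dvd_sub (dvd_sub (gmod_dvd (2 ^ k) z) (gmod_dvd (2 ^ k) z'))
    (dvd_sub (trim_dvd (2 ^ k) (gmod (2 ^ k * 2) z'))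
      (trim_dvd (2 ^ k) (gmod (2 ^ k * 2) z)))
  rw [h] at a3
  have a4 := dvd_sub (dvd_sub (gmod_dvd (2 ^ k) z) (gmod_dvd (2 ^ k) z'))
    (dvd_sub (trim_dvd (2 ^ k) (gmod (2 ^ k * 2) z))
      (trim_dvd (2 ^ k) (gmod (2 ^ k * 2) z')))
  rw [h] at a4
  convert a4 using 1
  ring

end
end

section
/- Let m ≥ 2 be even, set n = 2^m, and let Λ = { (1+i)^m a + Φ(c) : a ∈ ℤ[i]^n, c ∈ C_{2^m} } ⊆ ℤ[i]^n, where Φ is applied componentwise. Let L_{2^m} = { χ(c) : c ∈ C_{2^m} } where χ(x) = Φ(x) mod 2^{m/2} is applied componentwise (with w mod 2^{m/2} the Gaussian integer whose real and imaginary parts are the residues in {0,…,2^{m/2}−1} of Re w and Im w). Then Λ = { (1+i)^m a + x : a ∈ ℤ[i]^n, x ∈ L_{2^m} }, and this decomposition is unique: every λ ∈ Λ can be written in exactly one way as λ = (1+i)^m a + x with a ∈ ℤ[i]^n and x ∈ L_{2^m}. -/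
open Polynomial

noncomputable section

/-- The linear code `C_{2^m} = { z · G_{2^m} : z ∈ U_m^{2^m} }`. -/
def Code (m : ℕ) : Set ((Fin m → Fin 2) → Um m) :=
  {c | ∃ z, c = Matrix.vecMul z (Gmat m)}

theorem aux_pow (h : ℕ) : (1 + gi) ^ (h + h) = gi ^ h * (((2 ^ h : ℤ)) : GaussianInt) := by
  have h1 : (1 + gi) ^ 2 = gi * 2 := by
    ext <;> simp [gi, pow_two]
  rw [← two_mul, pow_mul, h1, mul_pow]
  push_cast
  rfl

theorem aux_gi (h : ℕ) : ∃ g : GaussianInt, gi ^ h * g = 1 := by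
  refine ⟨(-gi) ^ h, ?_⟩
  have h1 : gi * (-gi) = 1 := by
    ext <;> simp [gi]
  rw [← mul_pow, h1, one_pow]

theorem aux_gmod_add (M : ℤ) (b x : GaussianInt) :
    gmod M ((M : GaussianInt) * b + x) = gmod M x := by
  ext <;> simp [gmod]

theorem aux_gmod_gmod (M : ℤ) (x : GaussianInt) : gmod M (gmod M x) = gmod M x := by
  ext <;> simp [gmod]

theorem aux_gmod_eq (M : ℤ) (x : GaussianInt) :
    ∃ b : GaussianInt, x = (M : GaussianInt) * b + gmod M x := by
  refine ⟨⟨x.re / M, x.im / M⟩, ?_⟩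
  ext <;> simp [gmod, Int.mul_ediv_add_emod]

/-- Reduction kills multiples of `(1+i)^m`. -/
theorem aux_red (m : ℕ) (heven : Even m) (a x : GaussianInt) :
    gmod (2 ^ (m / 2)) ((1 + gi) ^ m * a + x) = gmod (2 ^ (m / 2)) x := by
  obtain ⟨h, rfl⟩ := heven
  have e : (h + h) / 2 = h := by omega
  rw [e, aux_pow, mul_comm (gi ^ h), mul_assoc, aux_gmod_add]

/-- Every Gaussian integer is congruent to its reduction modulo `(1+i)^m`. -/
theorem aux_ex (m : ℕ) (heven : Even m) (x : GaussianInt) :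
    ∃ b : GaussianInt, x = (1 + gi) ^ m * b + gmod (2 ^ (m / 2)) x := by
  obtain ⟨h, rfl⟩ := heven
  have e : (h + h) / 2 = h := by omega
  obtain ⟨b, hb⟩ := aux_gmod_eq (2 ^ h) x
  obtain ⟨g, hg⟩ := aux_gi h
  refine ⟨g * b, ?_⟩
  rw [e, aux_pow]
  have e2 : gi ^ h * (((2 ^ h : ℤ)) : GaussianInt) * (g * b)
      = (((2 ^ h : ℤ)) : GaussianInt) * b := by
    linear_combination (((2 ^ h : ℤ)) : GaussianInt) * b * hg
  rw [e2]
  exact hb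

theorem aux_ne (m : ℕ) : (1 + gi) ^ m ≠ 0 := by
  apply pow_ne_zero
  intro h
  have := congrArg Zsqrtd.re h
  simp [gi] at this

/-- For even `m ≥ 2`, with `Φ : U_m → ℤ[i]` the radix-`(1+i)` embedding, the lattice
`Λ = { (1+i)^m a + Φ(c) : a ∈ ℤ[i]^n, c ∈ C_{2^m} }` equals
`{ (1+i)^m a + x : a ∈ ℤ[i]^n, x ∈ L_{2^m} }`, where
`L_{2^m} = { Φ(c) mod 2^(m/2) : c ∈ C_{2^m} }` (mod taken componentwise), and this
decomposition of each `λ ∈ Λ` as `(1+i)^m a + x` with `x ∈ L_{2^m}` is unique. -/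
theorem stmt11 (m : ℕ) (hm : 2 ≤ m) (heven : Even m)
    (Φ : Um m → GaussianInt)
    (hΦ : ∀ p : Polynomial F2, p.degree < (m : WithBot ℕ) →
      Φ (Ideal.Quotient.mk (Ideal.span {(X : Polynomial F2) ^ m}) p) =
        ∑ j ∈ Finset.range m, psiG (p.coeff j) * (1 + gi) ^ j) :
    ({v : (Fin m → Fin 2) → GaussianInt |
        ∃ a : (Fin m → Fin 2) → GaussianInt, ∃ c ∈ Code m,
          v = fun k => (1 + gi) ^ m * a k + Φ (c k)} =
      {v : (Fin m → Fin 2) → GaussianInt |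
        ∃ a : (Fin m → Fin 2) → GaussianInt,
        ∃ x ∈ {y : (Fin m → Fin 2) → GaussianInt |
            ∃ c ∈ Code m, y = fun k => gmod (2 ^ (m / 2)) (Φ (c k))},
          v = fun k => (1 + gi) ^ m * a k + x k}) ∧
    ∀ v ∈ {v : (Fin m → Fin 2) → GaussianInt |
        ∃ a : (Fin m → Fin 2) → GaussianInt, ∃ c ∈ Code m,
          v = fun k => (1 + gi) ^ m * a k + Φ (c k)},
      ∃! p : ((Fin m → Fin 2) → GaussianInt) × ((Fin m → Fin 2) → GaussianInt),
        (∃ c ∈ Code m, p.2 = fun k => gmod (2 ^ (m / 2)) (Φ (c k))) ∧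
        v = fun k => (1 + gi) ^ m * p.1 k + p.2 k := by
  choose B hB using aux_ex m heven
  refine ⟨?_, ?_⟩
  · ext v
    constructor
    · rintro ⟨a, c, hc, rfl⟩
      refine ⟨fun k => a k + B (Φ (c k)), _, ⟨c, hc, rfl⟩, ?_⟩
      funext k
      linear_combination hB (Φ (c k))
    · rintro ⟨a, x, ⟨c, hc, rfl⟩, rfl⟩
      refine ⟨fun k => a k - B (Φ (c k)), c, hc, ?_⟩
      funext k
      linear_combination -hB (Φ (c k))
  · rintro v ⟨a, c, hc, rfl⟩
    refine ⟨(fun k => a k + B (Φ (c k)), fun k => gmod (2 ^ (m / 2)) (Φ (c k))),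
      ⟨⟨c, hc, rfl⟩, ?_⟩, ?_⟩
    · funext k
      linear_combination hB (Φ (c k))
    · rintro ⟨a', x'⟩ ⟨⟨c', hc', hx'⟩, hv⟩
      simp only at hx' hv
      have hx : ∀ k, x' k = gmod (2 ^ (m / 2)) (Φ (c k)) := by
        intro k
        have h1 := congrArg (gmod (2 ^ (m / 2))) (congrFun hv k)
        rw [aux_red m heven, aux_red m heven] at h1
        rw [h1, hx', aux_gmod_gmod]
      refine Prod.ext ?_ (funext hx)
      funext k
      apply mul_left_cancel₀ (aux_ne m)
      have h2 := congrFun hv k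
      simp only at h2 ⊢
      linear_combination hB (Φ (c k)) - h2 - hx k

end
end

section
/- Let σ > 0 and let μ be the product of two copies of the Gaussian measure on ℝ with mean 0 and variance σ²/2. Then the probability under μ that ⌈X⌋ + ⌈Y⌋ is odd (i.e. the cross-over probability P_c of the virtual binary channel induced by the round-modulo operation) satisfies P_c ≤ Σ_{a∈ℤ} exp( −(2a + 1/2)²/σ² ). -/
open MeasureTheory ProbabilityTheory

noncomputable section

/-- Radial integral. -/
lemma radial_aux (σ : ℝ) (hσ : 0 < σ) :
    ∫⁻ r in Set.Ioi (1 / 2 : ℝ), ENNReal.ofReal (r * ((Real.pi * σ ^ 2)⁻¹ * Real.exp (-r ^ 2 / σ ^ 2)))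
      = ENNReal.ofReal ((2 * Real.pi)⁻¹ * Real.exp (-(1 / 2) ^ 2 / σ ^ 2)) := by
  have hpi := Real.pi_pos
  have hd : ∀ x ∈ Set.Ici (1 / 2 : ℝ),
      HasDerivAt (fun r : ℝ => -((2 * Real.pi)⁻¹ * Real.exp (-r ^ 2 / σ ^ 2)))
        (x * ((Real.pi * σ ^ 2)⁻¹ * Real.exp (-x ^ 2 / σ ^ 2))) x := by
    intro x _
    have h1 : HasDerivAt (fun r : ℝ => -r ^ 2 / σ ^ 2) (-(2 * x) / σ ^ 2) x := by
      simpa using ((hasDerivAt_pow 2 x).neg).div_const (σ ^ 2)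
    refine HasDerivAt.congr_deriv ((h1.exp).const_mul ((2 * Real.pi)⁻¹)).neg ?_
    field_simp
  have hnn : ∀ x ∈ Set.Ioi (1 / 2 : ℝ),
      0 ≤ (x * ((Real.pi * σ ^ 2)⁻¹ * Real.exp (-x ^ 2 / σ ^ 2))) := by
    intro x hx
    have : (0 : ℝ) < x := lt_trans (by norm_num) hx
    positivity
  have ht : Filter.Tendsto (fun r : ℝ => -((2 * Real.pi)⁻¹ * Real.exp (-r ^ 2 / σ ^ 2)))
      Filter.atTop (nhds 0) := by
    have h2 : Filter.Tendsto (fun r : ℝ => -r ^ 2 / σ ^ 2) Filter.atTop Filter.atBot := by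
      apply Filter.Tendsto.atBot_div_const (by positivity)
      exact Filter.tendsto_neg_atTop_atBot.comp (Filter.tendsto_pow_atTop (by norm_num))
    simpa using ((Real.tendsto_exp_atBot.comp h2).const_mul ((2 * Real.pi)⁻¹)).neg
  rw [← ofReal_integral_eq_lintegral_ofReal (integrableOn_Ioi_deriv_of_nonneg' hd hnn ht)
    ((ae_restrict_iff' measurableSet_Ioi).2 (ae_of_all _ hnn)),
    integral_Ioi_of_hasDerivAt_of_nonneg' hd hnn ht]
  congr 1
  ring

lemma disc_aux (σ : ℝ) (hσ : 0 < σ) :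
    ((gaussianReal 0 (σ ^ 2 / 2).toNNReal).prod (gaussianReal 0 (σ ^ 2 / 2).toNNReal))
        {p : ℝ × ℝ | (1 / 2) ^ 2 ≤ p.1 ^ 2 + p.2 ^ 2} ≤
      ENNReal.ofReal (Real.exp (-(1 / 2) ^ 2 / σ ^ 2)) := by
  have hpi := Real.pi_pos
  have hv : (σ ^ 2 / 2).toNNReal ≠ 0 := by
    have : 0 < (σ ^ 2 / 2).toNNReal := Real.toNNReal_pos.2 (by positivity)
    exact this.ne'
  have hvc : (((σ ^ 2 / 2).toNNReal : NNReal) : ℝ) = σ ^ 2 / 2 := Real.coe_toNNReal _ (by positivity)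
  have hS : MeasurableSet {p : ℝ × ℝ | (1 / 2) ^ 2 ≤ p.1 ^ 2 + p.2 ^ 2} :=
    measurableSet_le (by fun_prop) (by fun_prop)
  have hpdf : ∀ x y : ℝ, gaussianPDF 0 (σ ^ 2 / 2).toNNReal x * gaussianPDF 0 (σ ^ 2 / 2).toNNReal y
      = ENNReal.ofReal ((Real.pi * σ ^ 2)⁻¹ * Real.exp (-(x ^ 2 + y ^ 2) / σ ^ 2)) := by
    intro x y
    rw [gaussianPDF, gaussianPDF, ← ENNReal.ofReal_mul (gaussianPDFReal_nonneg _ _ _)]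
    congr 1
    rw [gaussianPDFReal, gaussianPDFReal, hvc, mul_mul_mul_comm, ← mul_inv,
      Real.mul_self_sqrt (by positivity), ← Real.exp_add]
    congr 2
    · ring
    · ring
  rw [gaussianReal_of_var_ne_zero _ hv, prod_withDensity (by fun_prop) (by fun_prop),
    withDensity_apply _ hS, ← Measure.volume_eq_prod, ← lintegral_indicator hS,
    ← lintegral_comp_polarCoord_symm]
  calc _ ≤ ∫⁻ p in polarCoord.target, (Set.Ici (1 / 2 : ℝ)).indicator
          (fun r => ENNReal.ofReal (r * ((Real.pi * σ ^ 2)⁻¹ * Real.exp (-r ^ 2 / σ ^ 2)))) p.1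
            * (fun _ : ℝ => (1 : ENNReal)) p.2 := by
        refine setLIntegral_mono' polarCoord.open_target.measurableSet ?_
        rintro ⟨r, θ⟩ ⟨hr, _⟩
        have hr : 0 < r := hr
        have key : (r * Real.cos θ) ^ 2 + (r * Real.sin θ) ^ 2 = r ^ 2 := by
          linear_combination r ^ 2 * Real.cos_sq_add_sin_sq θ
        simp only [polarCoord_symm_apply, smul_eq_mul, mul_one]
        by_cases h : (1 / 2 : ℝ) ≤ r
        · rw [Set.indicator_of_mem (show r ∈ Set.Ici (1 / 2 : ℝ) from h)]
          rw [ENNReal.ofReal_mul hr.le]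
          gcongr
          refine (Set.indicator_le_self _ _ _).trans ?_
          rw [hpdf, key]
        · rw [Set.indicator_of_notMem, mul_zero]
          · exact zero_le
          · simp only [Set.mem_ofPred_eq, key]
            intro h'
            exact h (le_of_sq_le_sq h' hr.le)
    _ = (∫⁻ r in Set.Ioi (0 : ℝ), (Set.Ici (1 / 2 : ℝ)).indicator
          (fun r => ENNReal.ofReal (r * ((Real.pi * σ ^ 2)⁻¹ * Real.exp (-r ^ 2 / σ ^ 2)))) r)
          * ∫⁻ θ in Set.Ioo (-Real.pi) Real.pi, 1 := by
        rw [polarCoord_target, Measure.volume_eq_prod, ← Measure.prod_restrict]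
        exact lintegral_prod_mul
          (Measurable.indicator (by fun_prop) measurableSet_Ici).aemeasurable aemeasurable_const
    _ ≤ (∫⁻ r in Set.Ioi (1 / 2 : ℝ),
          ENNReal.ofReal (r * ((Real.pi * σ ^ 2)⁻¹ * Real.exp (-r ^ 2 / σ ^ 2))))
          * ENNReal.ofReal (2 * Real.pi) := by
        refine mul_le_mul' ?_ ?_
        · refine (setLIntegral_le_lintegral _ _).trans ?_
          rw [lintegral_indicator measurableSet_Ici, setLIntegral_congr Ioi_ae_eq_Ici]
        · simp only [lintegral_const, one_mul, Measure.restrict_apply_univ, Real.volume_Ioo]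
          apply ENNReal.ofReal_le_ofReal
          linarith
    _ = _ := by
        rw [radial_aux σ hσ, ← ENNReal.ofReal_mul (by positivity)]
        congr 1
        field_simp

lemma odd_aux (x y : ℝ) (h : Odd (round x + round y)) : (1 / 2 : ℝ) ^ 2 ≤ x ^ 2 + y ^ 2 := by
  have hne : ∀ z : ℝ, round z ≠ 0 → (1 / 2 : ℝ) ^ 2 ≤ z ^ 2 := by
    intro z hz
    have h1 := abs_sub_round z
    have h2 : (1 : ℝ) ≤ |(round z : ℝ)| := by exact_mod_cast Int.one_le_abs hz
    have h3 := abs_sub_abs_le_abs_sub (round z : ℝ) z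
    rw [abs_sub_comm] at h3
    rw [← sq_abs z]
    have h4 : 1 / 2 ≤ |z| := by linarith
    gcongr
  by_cases hx : round x = 0
  · have hy : round y ≠ 0 := by
      intro hy
      simp [hx, hy] at h
    linarith [hne y hy, sq_nonneg x]
  · linarith [hne x hx, sq_nonneg y]

lemma summable_aux (σ : ℝ) (hσ : 0 < σ) :
    Summable fun a : ℤ => Real.exp (-(2 * (a : ℝ) + 1 / 2) ^ 2 / σ ^ 2) := by
  have hg : Summable fun n : ℕ => Real.exp (n * (-(1 / σ ^ 2))) :=
    Real.summable_exp_nat_mul_iff.2 (by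
      have : 0 < 1 / σ ^ 2 := by positivity
      linarith)
  apply Summable.of_nat_of_neg
  · refine Summable.of_nonneg_of_le (fun _ => (Real.exp_pos _).le) (fun n => ?_) hg
    rw [Real.exp_le_exp, show (n : ℝ) * (-(1 / σ ^ 2)) = (-n) / σ ^ 2 by ring]
    gcongr
    push_cast
    nlinarith [Nat.cast_nonneg (α := ℝ) n, sq_nonneg (n : ℝ)]
  · refine Summable.of_nonneg_of_le (fun _ => (Real.exp_pos _).le) (fun n => ?_) hg
    rw [Real.exp_le_exp, show (n : ℝ) * (-(1 / σ ^ 2)) = (-n) / σ ^ 2 by ring]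
    gcongr
    rcases Nat.eq_zero_or_pos n with rfl | hn
    · norm_num
    · have : (1 : ℝ) ≤ n := by exact_mod_cast hn
      push_cast
      nlinarith

/-- The cross-over probability `P_c` of the virtual binary channel induced by the
round-modulo operation — i.e. the probability, under the product of two copies of the
Gaussian measure with mean `0` and variance `σ²/2`, that `⌈X⌋ + ⌈Y⌋` is odd — satisfies
`P_c ≤ Σ_{a ∈ ℤ} exp(-(2a + 1/2)²/σ²)`. -/
theorem stmt16 (σ : ℝ) (hσ : 0 < σ) :
    (((gaussianReal 0 (σ ^ 2 / 2).toNNReal).prod (gaussianReal 0 (σ ^ 2 / 2).toNNReal))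
        {p : ℝ × ℝ | Odd (round p.1 + round p.2)}).toReal ≤
      ∑' a : ℤ, Real.exp (-(2 * (a : ℝ) + 1 / 2) ^ 2 / σ ^ 2) := by
  have h1 : (((gaussianReal 0 (σ ^ 2 / 2).toNNReal).prod (gaussianReal 0 (σ ^ 2 / 2).toNNReal))
        {p : ℝ × ℝ | Odd (round p.1 + round p.2)}).toReal ≤
      Real.exp (-(1 / 2) ^ 2 / σ ^ 2) := by
    refine ENNReal.toReal_le_of_le_ofReal (Real.exp_pos _).le ?_
    exact (measure_mono (fun p hp => odd_aux p.1 p.2 hp)).trans (disc_aux σ hσ)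
  refine h1.trans ?_
  have h2 := (summable_aux σ hσ).le_tsum 0 (fun _ _ => (Real.exp_pos _).le)
  simpa using h2

end
end
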